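/- Let 1 < β < 2, let U be a finite universe of n ≥ 1 elements and F a finite family of subsets of U. Suppose each element e ∈ U is assigned to a set asn(e) ∈ F containing it, with cov(s) = {e ∈ U : asn(e) = s}, and each set s with cov(s) ≠ ∅ carries a level lev(s) ∈ [0, ⌈log_β n⌉], with lev(e) = lev(asn(e)), such that: (1) |cov(s)| ≥ β^{lev(s)} for every s with cov(s) ≠ ∅, and (2) |{e ∈ s : lev(e) < j}| < β^j for every s ∈ F and every natural number j ≤ log_β n. Let C = {s ∈ F : cov(s) ≠ ∅} and let D ⊂ U be any set of deleted elements with |D| ≤ (β - 1)·|C|. Then every subfamily of F whose union contains U \ D has size at least (2 - β)·|C| / (β·(ln n + 1)); in particular the optimum set cover size k' for the universe U \ D satisfies k' ≥ (2 - β)·|C| / (β·(ln n + 1)). -/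

import Mathlib

/-!
Give each element `e` of `U` the weight `1 / |cov (asn e)|`. Each nonempty `cov s` has total weight
`1`, so `U` has weight `|C|`, and since weights are at most `1` at least `|C| - |D|` of it survives
in `U \ D`. On the other hand a single set `s` carries little weight: condition (1) bounds the
weight of `e` by `β ^ (-lev e)`, while condition (2) with `j = lev e + 1` bounds the rank `k` of `e`
in `s`, ordered by level, by `β ^ (lev e + 1)`. Hence `e` weighs at most `β / k`, and `s` at most
`β` times the harmonic number of `|s|`, so a cover of `U \ D` needs many sets.
-/

section

variable {α γ K : Type*}

theorem monotone_harmonic : Monotone harmonic :=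
  monotone_nat_of_le_succ fun n => by
    rw [harmonic_succ]
    exact le_add_of_nonneg_right (by positivity)

theorem sum_biUnion_le_sum_sum {ι M : Type*} [AddCommMonoid M] [PartialOrder M]
    [IsOrderedAddMonoid M] [DecidableEq α] {w : α → M} (hw : ∀ e, 0 ≤ w e)
    (A : Finset ι) (f : ι → Finset α) :
    ∑ e ∈ A.biUnion f, w e ≤ ∑ i ∈ A, ∑ e ∈ f i, w e := by
  have hunion : ∀ {s t : Finset α}, ∑ e ∈ s ∪ t, w e ≤ ∑ e ∈ s, w e + ∑ e ∈ t, w e := by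
    intro s t
    rw [← Finset.sum_union_inter]
    exact le_add_of_nonneg_right (Finset.sum_nonneg fun e _ => hw e)
  rw [← Finset.sup_eq_biUnion]
  exact Finset.apply_sup_le_sum (f := fun s => ∑ e ∈ s, w e) Finset.sum_empty hunion A

theorem sum_inv_card_fiber_eq_card_image [DivisionRing K] [CharZero K] [DecidableEq γ]
    (U : Finset α) (g : α → γ) :
    ∑ e ∈ U, ((U.filter (fun x => g x = g e)).card : K)⁻¹ = (U.image g).card := by
  rw [Finset.sum_comp (fun c => ((U.filter (fun x => g x = c)).card : K)⁻¹) g,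
    Finset.cast_card]
  refine Finset.sum_congr rfl fun c hc => ?_
  rw [nsmul_eq_mul, mul_inv_cancel₀]
  obtain ⟨a, ha, hac⟩ := Finset.mem_image.mp hc
  exact Nat.cast_ne_zero.mpr (Finset.card_ne_zero_of_mem (Finset.mem_filter.mpr ⟨ha, hac⟩))

theorem filter_fiber_nonempty_eq_image [DecidableEq γ] {U : Finset α} {F : Finset γ} {g : α → γ}
    (hg : ∀ e ∈ U, g e ∈ F) :
    F.filter (fun c => (U.filter (fun e => g e = c)).Nonempty) = U.image g := by
  ext c
  simp only [Finset.mem_filter, Finset.filter_nonempty_iff, Finset.mem_image,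
    and_iff_right_iff_imp]
  rintro ⟨e, he, rfl⟩
  exact hg e he

section OrderedField

variable [Field K] [LinearOrder K] [IsStrictOrderedRing K]

theorem sum_inv_card_filter_le_le_harmonic {ι : Type*} [LinearOrder ι] (f : α → ι)
    (s : Finset α) :
    ∑ a ∈ s, ((s.filter (fun e => f e ≤ f a)).card : K)⁻¹ ≤ (harmonic s.card : K) := by
  classical
  induction s using Finset.induction_on_max_value f with
  | empty => simp
  | insert a s ha hmax ih =>
    have hlast : (insert a s).filter (fun e => f e ≤ f a) = insert a s :=
      Finset.filter_true_of_mem (by simpa using hmax)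
    have hrest : ∑ b ∈ s, (((insert a s).filter (fun e => f e ≤ f b)).card : K)⁻¹ ≤
        ∑ b ∈ s, ((s.filter (fun e => f e ≤ f b)).card : K)⁻¹ := by
      refine Finset.sum_le_sum fun b hb => inv_anti₀ ?_ ?_
      · exact Nat.cast_pos.mpr (Finset.card_pos.mpr ⟨b, Finset.mem_filter.mpr ⟨hb, le_rfl⟩⟩)
      · gcongr
        exact Finset.subset_insert a s
    rw [Finset.sum_insert ha, hlast, Finset.card_insert_of_notMem ha, harmonic_succ, add_comm]
    push_cast
    gcongr
    exact hrest.trans ih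

theorem sum_inv_pow_le_mul_harmonic {β : K} (hβ : 0 < β) (lev : α → ℕ) (s : Finset α)
    (h : ∀ j, ((s.filter (fun e => lev e < j)).card : K) ≤ β ^ j) :
    ∑ e ∈ s, (β ^ lev e)⁻¹ ≤ β * (harmonic s.card : K) := by
  have hrank : ∀ e ∈ s,
      (β ^ lev e)⁻¹ ≤ β * ((s.filter (fun x => lev x ≤ lev e)).card : K)⁻¹ := by
    intro e he
    have hpos : (0 : K) < (s.filter (fun x => lev x ≤ lev e)).card :=
      Nat.cast_pos.mpr (Finset.card_pos.mpr ⟨e, Finset.mem_filter.mpr ⟨he, le_rfl⟩⟩)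
    rw [← div_eq_mul_inv, le_div_iff₀ hpos, inv_mul_le_iff₀ (by positivity), ← pow_succ]
    simpa only [Nat.lt_succ_iff] using h (lev e + 1)
  calc ∑ e ∈ s, (β ^ lev e)⁻¹
      ≤ β * ∑ e ∈ s, ((s.filter (fun x => lev x ≤ lev e)).card : K)⁻¹ := by
        rw [Finset.mul_sum]
        exact Finset.sum_le_sum hrank
    _ ≤ β * (harmonic s.card : K) := by
        gcongr
        exact sum_inv_card_filter_le_le_harmonic lev s

theorem card_image_le_card_add_mul_sum_harmonic [DecidableEq α] [DecidableEq γ]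
    {β : K} (hβ : 0 < β) {U D : Finset α} {asn : α → γ} {lev : α → ℕ} {A : Finset (Finset α)}
    (hAU : ∀ s ∈ A, s ⊆ U)
    (hfiber : ∀ e ∈ U, β ^ lev e ≤ ((U.filter (fun x => asn x = asn e)).card : K))
    (hlev : ∀ s ∈ A, ∀ j, ((s.filter (fun e => lev e < j)).card : K) ≤ β ^ j)
    (hcover : U \ D ⊆ A.biUnion id) :
    ((U.image asn).card : K) ≤ D.card + β * ∑ s ∈ A, (harmonic s.card : K) := by
  set w : α → K := fun e => ((U.filter (fun x => asn x = asn e)).card : K)⁻¹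
  have hw0 : ∀ e, 0 ≤ w e := fun e => by positivity
  have hdeleted : ∑ e ∈ U ∩ D, w e ≤ D.card :=
    calc ∑ e ∈ U ∩ D, w e ≤ ∑ e ∈ D, w e :=
          Finset.sum_le_sum_of_subset_of_nonneg Finset.inter_subset_right fun e _ _ => hw0 e
      _ ≤ ∑ e ∈ D, 1 := Finset.sum_le_sum fun e _ => Nat.cast_inv_le_one _
      _ = D.card := by simp
  have hset : ∀ s ∈ A, ∑ e ∈ s, w e ≤ β * (harmonic s.card : K) := fun s hs =>
    (Finset.sum_le_sum fun e he => inv_anti₀ (by positivity) (hfiber e (hAU s hs he))).trans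
      (sum_inv_pow_le_mul_harmonic hβ lev s (hlev s hs))
  have hsurviving : ∑ e ∈ U \ D, w e ≤ β * ∑ s ∈ A, (harmonic s.card : K) :=
    calc ∑ e ∈ U \ D, w e ≤ ∑ e ∈ A.biUnion id, w e :=
          Finset.sum_le_sum_of_subset_of_nonneg hcover fun e _ _ => hw0 e
      _ ≤ ∑ s ∈ A, ∑ e ∈ s, w e := sum_biUnion_le_sum_sum hw0 A id
      _ ≤ β * ∑ s ∈ A, (harmonic s.card : K) := by
          rw [Finset.mul_sum]
          exact Finset.sum_le_sum hset
  calc ((U.image asn).card : K) = ∑ e ∈ U ∩ D, w e + ∑ e ∈ U \ D, w e := by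
        rw [Finset.sum_inter_add_sum_sdiff, sum_inv_card_fiber_eq_card_image]
    _ ≤ D.card + β * ∑ s ∈ A, (harmonic s.card : K) := add_le_add hdeleted hsurviving

end OrderedField

theorem card_filter_lt_le_pow_of_le_logb {β : ℝ} (hβ : 1 < β) {n : ℕ} (hn : 1 ≤ n)
    {f : α → ℕ} {s : Finset α} (hs : s.card ≤ n)
    (h : ∀ j : ℕ, (j : ℝ) ≤ Real.logb β n → ((s.filter (fun e => f e < j)).card : ℝ) ≤ β ^ j)
    (j : ℕ) : ((s.filter (fun e => f e < j)).card : ℝ) ≤ β ^ j := by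
  rcases le_or_gt (j : ℝ) (Real.logb β n) with hj | hj
  · exact h j hj
  · rw [Real.logb_lt_iff_lt_rpow hβ (Nat.cast_pos.mpr hn), Real.rpow_natCast] at hj
    exact (Nat.cast_le.mpr ((Finset.card_filter_le s _).trans hs)).trans hj.le

theorem stmt_5_general [DecidableEq α] [DecidableEq γ] {β : ℝ} (hβ : 1 < β)
    {U D : Finset α} (hU : 1 ≤ U.card) {asn : α → γ} {lev : α → ℕ} {A : Finset (Finset α)}
    (hAU : ∀ s ∈ A, s ⊆ U)
    (hfiber : ∀ e ∈ U, β ^ lev e ≤ ((U.filter (fun x => asn x = asn e)).card : ℝ))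
    (hlev : ∀ s ∈ A, ∀ j : ℕ, (j : ℝ) ≤ Real.logb β U.card →
      ((s.filter (fun e => lev e < j)).card : ℝ) ≤ β ^ j)
    (hcover : ∀ e ∈ U \ D, ∃ s ∈ A, e ∈ s) :
    ((U.image asn).card - D.card) / (β * (Real.log U.card + 1)) ≤ (A.card : ℝ) := by
  have hβ0 : 0 < β := zero_lt_one.trans hβ
  have hharmonic : ∀ s ∈ A, (harmonic s.card : ℝ) ≤ Real.log U.card + 1 := fun s hs =>
    calc (harmonic s.card : ℝ) ≤ harmonic U.card := by
          exact_mod_cast monotone_harmonic (Finset.card_le_card (hAU s hs))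
      _ ≤ Real.log U.card + 1 := by
          rw [add_comm]
          exact harmonic_le_one_add_log _
  rw [div_le_iff₀ (by positivity), sub_le_iff_le_add']
  calc ((U.image asn).card : ℝ) ≤ D.card + β * ∑ s ∈ A, (harmonic s.card : ℝ) :=
        card_image_le_card_add_mul_sum_harmonic hβ0 hAU hfiber
          (fun s hs => card_filter_lt_le_pow_of_le_logb hβ hU (Finset.card_le_card (hAU s hs))
            (hlev s hs))
          (fun e he => Finset.mem_biUnion.mpr (hcover e he))
    _ ≤ D.card + β * (A.card * (Real.log U.card + 1)) := by
        gcongr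
        rw [← nsmul_eq_mul]
        exact Finset.sum_le_card_nsmul A _ _ hharmonic
    _ = D.card + A.card * (β * (Real.log U.card + 1)) := by ring

end

/-- robustness, Claim 4 of the paper. Let `1 < β < 2`, `U` a finite
universe of `n ≥ 1` elements and `F` a finite family of subsets of `U`, with an assignment
`asn`, covers `cov s = {e ∈ U : asn e = s}`, and levels `lev s ∈ [0, ⌈log_β n⌉]` for sets
with nonempty `cov` (elements inheriting `lev e = lev (asn e)`), satisfying
(1) `|cov s| ≥ β ^ lev s` for every `s` with `cov s ≠ ∅`, and
(2) `|{e ∈ s : lev e < j}| < β ^ j` for every `s ∈ F` and natural `j ≤ log_β n`.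
Let `C = {s ∈ F : cov s ≠ ∅}` and let `D ⊂ U` with `|D| ≤ (β - 1)·|C|`. Then every
subfamily of `F` covering `U \ D` has size at least `(2 - β)·|C| / (β·(ln n + 1))`;
in particular the optimum cover size for `U \ D` obeys this lower bound. -/
theorem stmt_5 {α : Type*} [DecidableEq α] (β : ℝ) (hβ : 1 < β) (hβ2 : β < 2)
    (U : Finset α) (F : Finset (Finset α)) (hn : 1 ≤ U.card)
    (hF : ∀ s ∈ F, s ⊆ U)
    (asn : α → Finset α)
    (hasn_mem : ∀ e ∈ U, asn e ∈ F) (hasn_in : ∀ e ∈ U, e ∈ asn e)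
    (lev : Finset α → ℕ)
    (hlev_ub : ∀ s ∈ F, (U.filter (fun e => asn e = s)).Nonempty →
      lev s ≤ ⌈Real.logb β (U.card : ℝ)⌉₊)
    (h1 : ∀ s ∈ F, (U.filter (fun e => asn e = s)).Nonempty →
      β ^ (lev s) ≤ ((U.filter (fun e => asn e = s)).card : ℝ))
    (h2 : ∀ s ∈ F, ∀ j : ℕ, (j : ℝ) ≤ Real.logb β (U.card : ℝ) →
      ((s.filter (fun e => lev (asn e) < j)).card : ℝ) < β ^ j)
    (C : Finset (Finset α))
    (hC : C = F.filter (fun s => (U.filter (fun e => asn e = s)).Nonempty))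
    (D : Finset α) (hD : D ⊂ U) (hDcard : (D.card : ℝ) ≤ (β - 1) * C.card) :
    ∀ C'' : Finset (Finset α), C'' ⊆ F → (∀ e ∈ U \ D, ∃ s ∈ C'', e ∈ s) →
      (2 - β) * C.card / (β * (Real.log (U.card : ℝ) + 1)) ≤ (C''.card : ℝ) := by
  intro A hA hcover
  have hC_image : C = U.image asn := hC.trans (filter_fiber_nonempty_eq_image hasn_mem)
  have hbound := stmt_5_general hβ hn (fun s hs => hF s (hA hs))
    (fun e he => h1 (asn e) (hasn_mem e he) ⟨e, Finset.mem_filter.mpr ⟨he, rfl⟩⟩)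
    (fun s hs j hj => (h2 s (hA hs) j hj).le) hcover
  rw [← hC_image] at hbound
  exact (div_le_div_of_nonneg_right (by linarith) (by positivity)).trans hbound
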